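/- Let p ∈ I and S' ⊆ J with |S'∖S_p| ≤ u − 1, and suppose the mixing inequality Mix≤(S',p) defines a facet of conv(X^{l,u}). Then: (U1) S_p ⊆ S'; (U2) if p ≥ 2 then |S'∖S_{p−1}| ≥ u; and (U3) |S'| ≥ u + 1. -/

import Mathlib

open Finset

noncomputable section

def Xset (n m l u : ℕ) (S : Fin m → Finset (Fin n)) : Set ((Fin n → ℝ) × (Fin m → ℝ)) :=
  {zd | (∀ j, zd.1 j = 0 ∨ zd.1 j = 1) ∧ (∀ i, zd.2 i = 0 ∨ zd.2 i = 1) ∧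
        (∀ i, zd.2 i = ∏ j ∈ S i, (1 - zd.1 j)) ∧
        (l : ℝ) ≤ ∑ j, zd.1 j ∧ ∑ j, zd.1 j ≤ (u : ℝ)}

def Dset (n m l u : ℕ) (S : Fin m → Finset (Fin n)) : Set (Fin m → ℝ) :=
  Prod.snd '' Xset n m l u S

def Xfiber (n m l u : ℕ) (S : Fin m → Finset (Fin n)) (δ : Fin m → ℝ) :
    Set (Fin n → ℝ) :=
  {z | (z, δ) ∈ Xset n m l u S}

/-- The family is closed under nonempty intersection. -/
def ClosedInter (n m : ℕ) (S : Fin m → Finset (Fin n)) : Prop :=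
  ∀ i j : Fin m, (S i ∩ S j).Nonempty → ∃ k, S i ∩ S j = S k

/-- The family is proper. -/
def ProperFam (n m l u : ℕ) (S : Fin m → Finset (Fin n)) : Prop :=
  ClosedInter n m S ∧
  ∃ D : Finset (Fin m → ℝ), (D : Set (Fin m → ℝ)) = Dset n m l u S ∧ D.card = m + 1 ∧
    AffineIndependent ℝ (Subtype.val : {x : Fin m → ℝ // x ∈ D} → (Fin m → ℝ))

/-- `f x ≤ c` is valid and defines a facet of `conv P`. -/
def IsFacet {E : Type*} [AddCommGroup E] [Module ℝ E] (P : Set E) (f : E → ℝ) (c : ℝ) :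
    Prop :=
  (∀ x ∈ P, f x ≤ c) ∧
  Module.finrank ℝ (affineSpan ℝ {x ∈ convexHull ℝ P | f x = c}).direction + 1 =
    Module.finrank ℝ (affineSpan ℝ P).direction

def SS (n m : ℕ) (S : Fin m → Finset (Fin n)) : ℕ → Finset (Fin n) :=
  fun k => if h : 1 ≤ k ∧ k ≤ m then S ⟨k - 1, by omega⟩ else if k = 0 then ∅ else Finset.univ

def dd (m : ℕ) (δ : Fin m → ℝ) : ℕ → ℝ :=
  fun k => if h : 1 ≤ k ∧ k ≤ m then δ ⟨k - 1, by omega⟩ else if k = 0 then 1 else 0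

def mixLeLHS (n m u : ℕ) (S : Fin m → Finset (Fin n)) (p : ℕ) (S' : Finset (Fin n))
    (zd : (Fin n → ℝ) × (Fin m → ℝ)) : ℝ :=
  ∑ j ∈ S', zd.1 j + ((u : ℝ) - ((S' \ SS n m S p).card : ℝ)) * dd m zd.2 p
    + ∑ i ∈ Finset.Icc (p + 1) m,
        (((S' \ SS n m S (i - 1)).card : ℝ) - ((S' \ SS n m S i).card : ℝ)) * dd m zd.2 i

def MixLe (n m u : ℕ) (S : Fin m → Finset (Fin n)) (p : ℕ) (S' : Finset (Fin n))
    (zd : (Fin n → ℝ) × (Fin m → ℝ)) : Prop :=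
  mixLeLHS n m u S p S' zd ≤ (u : ℝ)

def mixGeLHS (n m l : ℕ) (S : Fin m → Finset (Fin n)) (p : ℕ) (S' : Finset (Fin n))
    (zd : (Fin n → ℝ) × (Fin m → ℝ)) : ℝ :=
  (((S' ∪ SS n m S p).card : ℝ) - (n : ℝ) + (l : ℝ)) * dd m zd.2 p
    + ∑ i ∈ Finset.Icc (p + 1) m,
        (((S' ∪ SS n m S i).card : ℝ) - ((S' ∪ SS n m S (i - 1)).card : ℝ)) * dd m zd.2 i
    - ∑ j ∈ S', zd.1 j

def MixGe (n m l : ℕ) (S : Fin m → Finset (Fin n)) (p : ℕ) (S' : Finset (Fin n))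
    (zd : (Fin n → ℝ) × (Fin m → ℝ)) : Prop :=
  mixGeLHS n m l S p S' zd ≤ 0

def NestedLin (n m l u : ℕ) (S : Fin m → Finset (Fin n))
    (zd : (Fin n → ℝ) × (Fin m → ℝ)) : Prop :=
  ((l : ℝ) ≤ ∑ j, zd.1 j) ∧ (∑ j, zd.1 j ≤ (u : ℝ)) ∧
  (∀ i : Fin m, ∀ j ∈ S i, zd.1 j + zd.2 i ≤ 1) ∧
  (1 ≤ dd m zd.2 1 + ∑ j ∈ SS n m S 1, zd.1 j) ∧
  (0 ≤ dd m zd.2 m) ∧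
  (∀ j, 0 ≤ zd.1 j) ∧
  (∀ j, j ∉ SS n m S m → zd.1 j ≤ 1) ∧
  (∀ i : ℕ, 1 ≤ i → i + 1 ≤ m → dd m zd.2 (i + 1) ≤ dd m zd.2 i) ∧
  (∀ i : ℕ, 1 ≤ i → i + 1 ≤ m →
    dd m zd.2 i - dd m zd.2 (i + 1) ≤ ∑ j ∈ SS n m S (i + 1) \ SS n m S i, zd.1 j)

def FollowsPattern (n : ℕ) (α α' : Fin n → ℝ) : Prop :=
  (∀ j, (0 ≤ α j → 0 ≤ α' j) ∧ (α j ≤ 0 → α' j ≤ 0)) ∧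
  (∀ j₁ j₂ : Fin n, α j₂ ≤ α j₁ → α' j₂ ≤ α' j₁)

def IsFacetSet {E : Type*} [AddCommGroup E] [Module ℝ E] (P : Set E) (F : Set E) : Prop :=
  ∃ (f : E →ₗ[ℝ] ℝ) (c : ℝ), (∀ x ∈ P, f x ≤ c) ∧
    F = {x ∈ convexHull ℝ P | f x = c} ∧
    Module.finrank ℝ (affineSpan ℝ F).direction + 1 =
      Module.finrank ℝ (affineSpan ℝ P).direction

/-!
The points of `Xset` are `vertex S A` with `l ≤ #A ≤ u`. Such a point either has `δ_p = 1`, that is,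
`A` misses `S_p`, or the left-hand side of the mixing inequality is `#(S' ∩ A)`, so that the point
is tight exactly when `#(S' ∩ A) = u`. A linear form `g` that is constant on the tight points of a
facet `f = c` is constant on the level sets of `f` in the whole polytope. If (U1), (U2) or (U3)
fails, then respectively `z_j` with `j ∈ S_p \ S'`, `δ_{p-1} - δ_p`, or `z_j + δ_p` with `j ∈ S_p`
is such a `g`, and two vertices with the same value of `f` but different values of `g` give the
contradiction.
-/

section Face

theorem vectorSpan_le_ker {R E F : Type*} [Ring R] [AddCommGroup E] [Module R E] [AddCommGroup F]
    [Module R F] {P : Set E} {g : E →ₗ[R] F} {k : F} (hg : ∀ x ∈ P, g x = k) :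
    vectorSpan R P ≤ LinearMap.ker g := by
  rw [vectorSpan_def, Submodule.span_le]
  rintro _ ⟨x, hx, y, hy, rfl⟩
  simp [hg x hx, hg y hy]

theorem setOf_mem_convexHull_and_eq {𝕜 E : Type*} [Field 𝕜] [LinearOrder 𝕜]
    [IsStrictOrderedRing 𝕜] [AddCommGroup E] [Module 𝕜 E] {P : Set E} {f : E →ₗ[𝕜] 𝕜} {c : 𝕜}
    (hf : ∀ x ∈ P, f x ≤ c) :
    {x ∈ convexHull 𝕜 P | f x = c} = convexHull 𝕜 {x ∈ P | f x = c} := by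
  refine Set.Subset.antisymm ?_ (convexHull_min (fun x hx => ⟨subset_convexHull 𝕜 P hx.1, hx.2⟩)
    ((convex_convexHull 𝕜 P).inter (convex_hyperplane f.isLinear c)))
  rintro x ⟨hx, hfx⟩
  obtain ⟨ι, _, z, w, hz, -, hw, hw1, rfl⟩ := eq_pos_convex_span_of_mem_convexHull hx
  have hzP (i : ι) : z i ∈ P := hz ⟨i, rfl⟩
  have hsum : ∑ i, w i * f (z i) = ∑ i, w i * c := by
    rw [← sum_mul, hw1, one_mul, ← hfx, map_sum]
    simp only [map_smul, smul_eq_mul]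
  have htight := (sum_eq_sum_iff_of_le fun i _ =>
    mul_le_mul_of_nonneg_left (hf _ (hzP i)) (hw i).le).1 hsum
  refine (convex_convexHull 𝕜 _).sum_mem (fun i _ => (hw i).le) hw1 fun i hi => ?_
  exact subset_convexHull 𝕜 _ ⟨hzP i, mul_left_cancel₀ (hw i).ne' (htight i hi)⟩

variable {E : Type*} [AddCommGroup E] [Module ℝ E] {P : Set E} {f g : E →ₗ[ℝ] ℝ} {c k : ℝ}

/- Pitfall: in `IsFacet` the empty face has dimension `0` instead of `-1`, so a segment on which `f`
is a constant less than `c` satisfies it, with no tight points at all. -/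
theorem IsFacet.vectorSpan_tight_eq (hP : IsFacet P f c) (hf : (f '' P).Nontrivial) :
    vectorSpan ℝ {x ∈ P | f x = c} = vectorSpan ℝ P ⊓ LinearMap.ker f := by
  obtain ⟨hle, hdim⟩ := hP
  rw [setOf_mem_convexHull_and_eq hle, affineSpan_convexHull, direction_affineSpan,
    direction_affineSpan] at hdim
  have : Module.Finite ℝ (vectorSpan ℝ P) := Module.finite_of_finrank_pos (by omega)
  have hlt : vectorSpan ℝ P ⊓ LinearMap.ker f < vectorSpan ℝ P := by
    refine inf_lt_left.2 fun hker => ?_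
    obtain ⟨_, ⟨x, hx, rfl⟩, _, ⟨y, hy, rfl⟩, hxy⟩ := hf
    have := hker (vsub_mem_vectorSpan ℝ hx hy)
    exact hxy (by simpa [sub_eq_zero] using this)
  have := Submodule.finiteDimensional_of_le hlt.le
  have hfinrank := Submodule.finrank_lt_finrank_of_lt hlt
  exact Submodule.eq_of_le_of_finrank_le
    (le_inf (vectorSpan_mono ℝ (Set.sep_subset _ _)) (vectorSpan_le_ker fun _ hx => hx.2))
    (by omega)

theorem IsFacet.apply_eq_apply (hP : IsFacet P f c) (hf : (f '' P).Nontrivial)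
    (hg : ∀ x ∈ P, f x = c → g x = k) {x y : E} (hx : x ∈ P) (hy : y ∈ P) (hxy : f x = f y) :
    g x = g y := by
  have hmem : x - y ∈ vectorSpan ℝ {x ∈ P | f x = c} := by
    rw [hP.vectorSpan_tight_eq hf]
    exact ⟨vsub_mem_vectorSpan ℝ hx hy, by simp [hxy]⟩
  have := vectorSpan_le_ker (fun x hx => hg x hx.1 hx.2) hmem
  simpa [sub_eq_zero] using this

end Face

variable {n m l u p q : ℕ} {S : Fin m → Finset (Fin n)} {S' A B C : Finset (Fin n)}
  {j : Fin n}

theorem SS_mono (hS : Monotone S) : Monotone (SS n m S) := by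
  intro i j hij
  unfold SS
  split_ifs with hi hj
  · exact hS (Fin.mk_le_mk.2 (by omega))
  all_goals first | omega | simp

theorem SS_strictMonoOn (hS : StrictMono S) : StrictMonoOn (SS n m S) (Set.Icc 1 m) := by
  rintro i ⟨hi, him⟩ j ⟨hj, hjm⟩ hij
  simp only [SS, hi, him, hj, hjm, and_self, dite_true]
  exact hS (Fin.mk_lt_mk.2 (by omega))

section LinearForms

/-- The coordinate `z_j` as a linear form. -/
def zForm (m : ℕ) (j : Fin n) : ((Fin n → ℝ) × (Fin m → ℝ)) →ₗ[ℝ] ℝ :=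
  LinearMap.proj j ∘ₗ LinearMap.fst ℝ _ _

/-- The coordinate `δ_k`, numbered from `1` as in `dd`, as a linear form. It is zero at `k = 0`,
where `dd` has the constant value `1`. -/
def deltaForm (n m k : ℕ) : ((Fin n → ℝ) × (Fin m → ℝ)) →ₗ[ℝ] ℝ :=
  if h : 1 ≤ k ∧ k ≤ m then LinearMap.proj ⟨k - 1, by omega⟩ ∘ₗ LinearMap.snd ℝ _ _ else 0

/-- The left-hand side `mixLeLHS` of the mixing inequality as a linear form, for `1 ≤ p`. -/
def mixLeForm (n m u : ℕ) (S : Fin m → Finset (Fin n)) (p : ℕ) (S' : Finset (Fin n)) :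
    ((Fin n → ℝ) × (Fin m → ℝ)) →ₗ[ℝ] ℝ :=
  ∑ j ∈ S', zForm m j + ((u : ℝ) - ((S' \ SS n m S p).card : ℝ)) • deltaForm n m p
    + ∑ i ∈ Icc (p + 1) m,
        (((S' \ SS n m S (i - 1)).card : ℝ) - ((S' \ SS n m S i).card : ℝ)) • deltaForm n m i

theorem deltaForm_apply {k : ℕ} (hk : 1 ≤ k) (x : (Fin n → ℝ) × (Fin m → ℝ)) :
    deltaForm n m k x = dd m x.2 k := by
  unfold deltaForm dd
  split_ifs <;> first | omega | rfl

theorem coe_mixLeForm (hp : 1 ≤ p) : ⇑(mixLeForm n m u S p S') = mixLeLHS n m u S p S' := by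
  funext x
  have hsum : ∀ i ∈ Icc (p + 1) m, deltaForm n m i x = dd m x.2 i := fun i hi =>
    deltaForm_apply (by have := (mem_Icc.1 hi).1; omega) x
  simp only [mixLeForm, mixLeLHS, LinearMap.add_apply, LinearMap.sum_apply, LinearMap.smul_apply,
    smul_eq_mul, deltaForm_apply hp]
  congr 1
  exact sum_congr rfl fun i hi => by rw [hsum i hi]

end LinearForms

section Vertex

/-- The point `(z, δ)` of the multilinear set for which `z` is the indicator vector of `A`. -/
def vertex (S : Fin m → Finset (Fin n)) (A : Finset (Fin n)) : (Fin n → ℝ) × (Fin m → ℝ) :=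
  (fun j => if j ∈ A then 1 else 0, fun i => if Disjoint (S i) A then 1 else 0)

theorem prod_one_sub_indicator {α R : Type*} [DecidableEq α] [CommRing R] (T A : Finset α) :
    ∏ j ∈ T, (1 - if j ∈ A then (1 : R) else 0) = if Disjoint T A then 1 else 0 := by
  have hfactor (j : α) : (1 - if j ∈ A then (1 : R) else 0) = if j ∉ A then 1 else 0 := by
    split_ifs <;> simp_all
  simp only [hfactor, prod_boole, disjoint_left]

theorem Xset_eq_image_vertex : Xset n m l u S = vertex S '' {A | l ≤ A.card ∧ A.card ≤ u} := by
  ext x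
  constructor
  · rintro ⟨hz, -, hδ, hl, hu⟩
    have hzA : x.1 = fun j => if j ∈ univ.filter (x.1 · = 1) then (1 : ℝ) else 0 := by
      funext j
      rcases hz j with h | h <;> simp [h]
    have hcard : ∑ j, x.1 j = (univ.filter (x.1 · = 1)).card := by
      rw [hzA]
      simp
    rw [hcard] at hl hu
    refine ⟨univ.filter (x.1 · = 1), ⟨mod_cast hl, mod_cast hu⟩, Prod.ext hzA.symm ?_⟩
    funext i
    rw [hδ i, hzA]
    simp only [vertex, prod_one_sub_indicator]
    simp
  · rintro ⟨A, ⟨hl, hu⟩, rfl⟩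
    refine ⟨fun j => ?_, fun i => ?_, fun i => (prod_one_sub_indicator _ _).symm, ?_, ?_⟩
    · simp only [vertex]; split_ifs <;> simp
    · simp only [vertex]; split_ifs <;> simp
    · simpa [vertex] using hl
    · simpa [vertex] using hu

theorem vertex_mem_Xset (hl : l ≤ A.card) (hu : A.card ≤ u) : vertex S A ∈ Xset n m l u S :=
  Xset_eq_image_vertex ▸ Set.mem_image_of_mem _ ⟨hl, hu⟩

theorem zForm_vertex (S : Fin m → Finset (Fin n)) :
    zForm m j (vertex S A) = if j ∈ A then 1 else 0 :=
  rfl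

theorem deltaForm_vertex (hp : 1 ≤ p) (hpm : p ≤ m) :
    deltaForm n m p (vertex S A) = if Disjoint (SS n m S p) A then 1 else 0 := by
  simp [deltaForm, SS, hp, hpm, vertex]

theorem mixLeForm_vertex (hS : Monotone S) (hp : 1 ≤ p) (hA : ¬Disjoint (SS n m S p) A) :
    mixLeForm n m u S p S' (vertex S A) = (S' ∩ A).card := by
  have hδ (i : ℕ) (hi : p ≤ i) : deltaForm n m i (vertex S A) = 0 := by
    by_cases him : i ≤ m
    · rw [deltaForm_vertex (hp.trans hi) him, if_neg]
      exact fun h => hA (disjoint_of_subset_left (SS_mono hS hi) h)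
    · simp [deltaForm, him]
  have hsum : ∀ i ∈ Icc (p + 1) m, deltaForm n m i (vertex S A) = 0 := fun i hi =>
    hδ i (by have := (mem_Icc.1 hi).1; omega)
  simp +contextual only [mixLeForm, LinearMap.add_apply, LinearMap.sum_apply, LinearMap.smul_apply,
    smul_eq_mul, hδ p le_rfl, hsum, zForm_vertex, mul_zero, sum_const_zero, add_zero]
  simp

end Vertex

section Facet

theorem exists_disjoint_card_eq {α : Type*} [Fintype α] {T : Finset α} {k : ℕ}
    (hk : k ≤ Fintype.card α - T.card) : ∃ C : Finset α, Disjoint T C ∧ C.card = k := by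
  classical
  obtain ⟨C, hC, hCk⟩ := exists_subset_card_eq (card_compl T ▸ hk)
  exact ⟨C, subset_compl_iff_disjoint_left.1 hC, hCk⟩

theorem exists_notMem_not_disjoint_card_eq {α : Type*} [Fintype α] {T : Finset α}
    (hT : 2 ≤ T.card) (hl : l ≤ Fintype.card α - T.card) (t : α) :
    ∃ A : Finset α, t ∉ A ∧ ¬Disjoint T A ∧ A.card = max l 1 := by
  classical
  obtain ⟨s, hs, hst⟩ := exists_mem_ne (show 1 < T.card by omega) t
  have hinsert := card_insert_le t T
  obtain ⟨C, hC, hCl⟩ := exists_disjoint_card_eq (T := insert t T) (k := l - 1) (by omega)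
  obtain ⟨htC, hTC⟩ := disjoint_insert_left.1 hC
  refine ⟨insert s C, by simp [hst.symm, htC],
    not_disjoint_iff.2 ⟨s, hs, mem_insert_self s C⟩, ?_⟩
  rw [card_insert_of_notMem (disjoint_left.1 hTC hs)]
  omega

theorem nontrivial_image_mixLeForm (hu : 2 ≤ u) (hlu : l < u) (hS : Monotone S) (hp : 1 ≤ p)
    (hpm : p ≤ m) (hSp : 2 ≤ (SS n m S p).card) (hl : l ≤ n - (SS n m S p).card) :
    (mixLeForm n m u S p S' '' Xset n m l u S).Nontrivial := by
  obtain rfl | ⟨t, ht⟩ := S'.eq_empty_or_nonempty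
  · obtain ⟨s, -⟩ := card_pos.1 (show 0 < (SS n m S p).card by omega)
    obtain ⟨A, -, hA, hAcard⟩ := exists_notMem_not_disjoint_card_eq hSp (by simpa using hl) s
    obtain ⟨D, hD, hDcard⟩ := exists_disjoint_card_eq (T := SS n m S p) (by simpa using hl)
    refine ⟨_, ⟨_, vertex_mem_Xset (A := A) (by omega) (by omega), rfl⟩,
      _, ⟨_, vertex_mem_Xset (A := D) (by omega) (by omega), rfl⟩, ?_⟩
    have hDu : mixLeForm n m u S p ∅ (vertex S D) = u := by
      simp [mixLeForm, deltaForm_vertex hp hpm, hD]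
    rw [mixLeForm_vertex hS hp hA, hDu, empty_inter, card_empty]
    exact mod_cast (show 0 ≠ u by omega)
  · obtain ⟨A, htA, hA, hAcard⟩ := exists_notMem_not_disjoint_card_eq hSp (by simpa using hl) t
    have hcard := card_insert_of_notMem htA
    refine ⟨_, ⟨_, vertex_mem_Xset (A := A) (by omega) (by omega), rfl⟩,
      _, ⟨_, vertex_mem_Xset (A := insert t A) (by omega) (by omega), rfl⟩, ?_⟩
    rw [mixLeForm_vertex hS hp hA, mixLeForm_vertex hS hp
      fun h => hA (disjoint_of_subset_right (subset_insert t A) h), inter_insert_of_mem ht,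
      card_insert_of_notMem fun h => htA (mem_inter.1 h).2]
    simp

variable {g : ((Fin n → ℝ) × (Fin m → ℝ)) →ₗ[ℝ] ℝ} {k : ℝ}

theorem apply_vertex_eq_of_card_inter_eq (hu : 2 ≤ u) (hlu : l < u) (hS : Monotone S)
    (hp : 1 ≤ p) (hpm : p ≤ m) (hSp : 2 ≤ (SS n m S p).card) (hl : l ≤ n - (SS n m S p).card)
    (hfacet : IsFacet (Xset n m l u S) (mixLeLHS n m u S p S') u)
    (hg : ∀ A, A.card ≤ u → Disjoint (SS n m S p) A ∨ (S' ∩ A).card = u → g (vertex S A) = k)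
    (hAl : l ≤ A.card) (hAu : A.card ≤ u) (hA : ¬Disjoint (SS n m S p) A)
    (hBl : l ≤ B.card) (hBu : B.card ≤ u) (hB : ¬Disjoint (SS n m S p) B)
    (hAB : (S' ∩ A).card = (S' ∩ B).card) : g (vertex S A) = g (vertex S B) := by
  rw [← coe_mixLeForm hp] at hfacet
  refine hfacet.apply_eq_apply (nontrivial_image_mixLeForm hu hlu hS hp hpm hSp hl) (k := k) ?_
    (vertex_mem_Xset hAl hAu) (vertex_mem_Xset hBl hBu) ?_
  · rw [Xset_eq_image_vertex]
    rintro _ ⟨D, ⟨-, hDu⟩, rfl⟩ htight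
    refine hg D hDu (or_iff_not_imp_left.2 fun hD => ?_)
    rw [mixLeForm_vertex hS hp hD] at htight
    exact mod_cast htight
  · rw [mixLeForm_vertex hS hp hA, mixLeForm_vertex hS hp hB, hAB]

theorem apply_vertex_insert_eq_of_mem (hu : 2 ≤ u) (hlu : l < u) (hS : Monotone S)
    (hp : 1 ≤ p) (hpm : p ≤ m) (hSp : 2 ≤ (SS n m S p).card) (hl : l ≤ n - (SS n m S p).card)
    (hfacet : IsFacet (Xset n m l u S) (mixLeLHS n m u S p S') u)
    (hg : ∀ A, A.card ≤ u → Disjoint (SS n m S p) A ∨ (S' ∩ A).card = u → g (vertex S A) = k)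
    (hC : Disjoint (SS n m S p) C) (hCl : C.card = l - 1) {a b : Fin n}
    (ha : a ∈ SS n m S p) (hb : b ∈ SS n m S p) (haS' : a ∈ S') (hbS' : b ∈ S') :
    g (vertex S (insert a C)) = g (vertex S (insert b C)) := by
  have hcard {c : Fin n} (hc : c ∈ SS n m S p) := card_insert_of_notMem (disjoint_left.1 hC hc)
  have hmeet {c : Fin n} (hc : c ∈ SS n m S p) : ¬Disjoint (SS n m S p) (insert c C) :=
    not_disjoint_iff.2 ⟨c, hc, mem_insert_self c C⟩
  have hinter {c : Fin n} (hc : c ∈ SS n m S p) (hcS' : c ∈ S') :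
      (S' ∩ insert c C).card = (S' ∩ C).card + 1 := by
    rw [inter_insert_of_mem hcS',
      card_insert_of_notMem fun h => disjoint_left.1 hC hc (mem_inter.1 h).2]
  have hca := hcard ha
  have hcb := hcard hb
  exact apply_vertex_eq_of_card_inter_eq hu hlu hS hp hpm hSp hl hfacet hg (by omega) (by omega)
    (hmeet ha) (by omega) (by omega) (hmeet hb) (by rw [hinter ha haS', hinter hb hbS'])

theorem SS_subset_of_isFacet_mixLeLHS (hu : 2 ≤ u) (hlu : l < u) (hS : Monotone S)
    (hp : 1 ≤ p) (hpm : p ≤ m) (hSp : 2 ≤ (SS n m S p).card) (hl : l ≤ n - (SS n m S p).card)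
    (hfacet : IsFacet (Xset n m l u S) (mixLeLHS n m u S p S') u) : SS n m S p ⊆ S' := by
  intro j hj
  by_contra hjS'
  have hg : ∀ A, A.card ≤ u → Disjoint (SS n m S p) A ∨ (S' ∩ A).card = u →
      zForm m j (vertex S A) = 0 := by
    intro A hAu hA
    rw [zForm_vertex, if_neg]
    intro hjA
    obtain hA | hA := hA
    · exact disjoint_left.1 hA hj hjA
    · have hAS' : S' ∩ A = A := eq_of_subset_of_card_le inter_subset_right (by omega)
      exact hjS' (inter_eq_right.1 hAS' hjA)
  obtain ⟨A, hjA, hA, hAcard⟩ := exists_notMem_not_disjoint_card_eq hSp (by simpa using hl) j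
  have hcard := card_insert_of_notMem hjA
  have := apply_vertex_eq_of_card_inter_eq (B := insert j A) hu hlu hS hp hpm hSp hl hfacet hg
    (by omega) (by omega) hA (by omega) (by omega)
    (fun h => hA (disjoint_of_subset_right (subset_insert j A) h))
    (by rw [inter_insert_of_notMem hjS'])
  simp [zForm_vertex, hjA] at this

theorem lt_card_of_isFacet_mixLeLHS (hu : 2 ≤ u) (hlu : l < u) (hS : Monotone S)
    (hp : 1 ≤ p) (hpm : p ≤ m) (hSp : 2 ≤ (SS n m S p).card) (hl : l ≤ n - (SS n m S p).card)
    (hfacet : IsFacet (Xset n m l u S) (mixLeLHS n m u S p S') u) : u < S'.card := by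
  have hsub := SS_subset_of_isFacet_mixLeLHS hu hlu hS hp hpm hSp hl hfacet
  by_contra! hle
  obtain ⟨j, hj, b, hb, hjb⟩ := one_lt_card.1 (show 1 < (SS n m S p).card by omega)
  have hg : ∀ A, A.card ≤ u → Disjoint (SS n m S p) A ∨ (S' ∩ A).card = u →
      (zForm m j + deltaForm n m p) (vertex S A) = 1 := by
    rintro A - (hA | hA) <;> rw [LinearMap.add_apply, zForm_vertex, deltaForm_vertex hp hpm]
    · simp [hA, disjoint_left.1 hA hj]
    · have hAS' : S' ∩ A = S' := eq_of_subset_of_card_le inter_subset_left (by omega)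
      have hjA : j ∈ A := inter_eq_left.1 hAS' (hsub hj)
      simp [hjA, not_disjoint_iff.2 ⟨j, hj, hjA⟩]
  obtain ⟨C, hC, hCl⟩ := exists_disjoint_card_eq (T := SS n m S p) (k := l - 1)
    (by rw [Fintype.card_fin]; omega)
  have := apply_vertex_insert_eq_of_mem hu hlu hS hp hpm hSp hl hfacet hg hC hCl hj hb
    (hsub hj) (hsub hb)
  simp [zForm_vertex, deltaForm_vertex hp hpm, hj, hb, hjb, disjoint_left.1 hC hj] at this

theorem le_card_sdiff_of_isFacet_mixLeLHS (hu : 2 ≤ u) (hlu : l < u) (hS : Monotone S)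
    (hp : 1 ≤ p) (hpm : p ≤ m) (hSp : 2 ≤ (SS n m S p).card) (hl : l ≤ n - (SS n m S p).card)
    (hfacet : IsFacet (Xset n m l u S) (mixLeLHS n m u S p S') u)
    (hqp : SS n m S q ⊂ SS n m S p) : u ≤ (S' \ SS n m S q).card := by
  have hsub := SS_subset_of_isFacet_mixLeLHS hu hlu hS hp hpm hSp hl hfacet
  obtain hq | ⟨s, hs⟩ := (SS n m S q).eq_empty_or_nonempty
  · simpa [hq] using (lt_card_of_isFacet_mixLeLHS hu hlu hS hp hpm hSp hl hfacet).le
  have hqm : q ≤ m := by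
    by_contra! hmq
    exact hqp.not_subset (SS_mono hS (hpm.trans hmq.le))
  have hq1 : 1 ≤ q := Nat.one_le_iff_ne_zero.2 fun h => by simp [h, SS] at hs
  have hδ (A : Finset (Fin n)) : (deltaForm n m q - deltaForm n m p) (vertex S A) =
      (if Disjoint (SS n m S q) A then 1 else 0) - if Disjoint (SS n m S p) A then 1 else 0 := by
    rw [LinearMap.sub_apply, deltaForm_vertex hq1 hqm, deltaForm_vertex hp hpm]
  by_contra! hlt
  have hg : ∀ A, A.card ≤ u → Disjoint (SS n m S p) A ∨ (S' ∩ A).card = u →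
      (deltaForm n m q - deltaForm n m p) (vertex S A) = 0 := by
    rintro A - (hA | hA) <;> rw [hδ]
    · simp [hA, disjoint_of_subset_left hqp.subset hA]
    · have hqA : ¬Disjoint (SS n m S q) A := fun h => by
        have := card_le_card (subset_sdiff.2
          ⟨inter_subset_left (s₁ := S'), h.symm.mono_left (inter_subset_right (s₁ := S'))⟩)
        omega
      have hpA : ¬Disjoint (SS n m S p) A := fun h => hqA (disjoint_of_subset_left hqp.subset h)
      simp [hqA, hpA]
  obtain ⟨b, hb, hbq⟩ := exists_of_ssubset hqp
  obtain ⟨C, hC, hCl⟩ := exists_disjoint_card_eq (T := SS n m S p) (k := l - 1)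
    (by rw [Fintype.card_fin]; omega)
  have hsp := hqp.subset hs
  have := apply_vertex_insert_eq_of_mem hu hlu hS hp hpm hSp hl hfacet hg hC hCl hsp hb
    (hsub hsp) (hsub hb)
  simp [hδ, hs, hsp, hb, hbq, disjoint_of_subset_left hqp.subset hC] at this

end Facet

theorem stmt14_general (hu : 2 ≤ u) (hlu : l < u) (hS : Monotone S) (hp : 1 ≤ p) (hpm : p ≤ m)
    (hSp : 2 ≤ (SS n m S p).card) (hl : l ≤ n - (SS n m S p).card)
    (hfacet : IsFacet (Xset n m l u S) (mixLeLHS n m u S p S') u) :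
    SS n m S p ⊆ S' ∧
    (∀ q, SS n m S q ⊂ SS n m S p → u ≤ (S' \ SS n m S q).card) ∧
    u + 1 ≤ S'.card :=
  ⟨SS_subset_of_isFacet_mixLeLHS hu hlu hS hp hpm hSp hl hfacet,
    fun _ => le_card_sdiff_of_isFacet_mixLeLHS hu hlu hS hp hpm hSp hl hfacet,
    lt_card_of_isFacet_mixLeLHS hu hlu hS hp hpm hSp hl hfacet⟩

theorem stmt14 (n m l u : ℕ) (S : Fin m → Finset (Fin n))
    (hn : 0 < n) (hm : 0 < m) (hu : 2 ≤ u) (hlu : l < u)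
    (hnested : ∀ i j : Fin m, i < j → S i ⊂ S j)
    (hS1 : 2 ≤ (SS n m S 1).card)
    (hSm : l ≤ n - (SS n m S m).card)
    (p : ℕ) (hp1 : 1 ≤ p) (hpm : p ≤ m)
    (S' : Finset (Fin n)) (hS' : (S' \ SS n m S p).card ≤ u - 1)
    (hfacet : IsFacet (Xset n m l u S) (mixLeLHS n m u S p S') (u : ℝ)) :
    SS n m S p ⊆ S' ∧
    (2 ≤ p → u ≤ (S' \ SS n m S (p - 1)).card) ∧
    u + 1 ≤ S'.card := by
  have hS : StrictMono S := fun i j => hnested i j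
  have hSS := SS_mono (n := n) hS.monotone
  obtain ⟨hU1, hU2, hU3⟩ := stmt14_general hu hlu hS.monotone hp1 hpm
    (hS1.trans (card_le_card (hSS hp1)))
    (hSm.trans (Nat.sub_le_sub_left (card_le_card (hSS hpm)) n)) hfacet
  have hlt (hp2 : 2 ≤ p) : SS n m S (p - 1) ⊂ SS n m S p :=
    SS_strictMonoOn hS ⟨by omega, by omega⟩ ⟨hp1, hpm⟩ (by omega)
  exact ⟨hU1, fun hp2 => hU2 _ (hlt hp2), hU3⟩
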